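/- In the group G presented by generators x_{31}, x_{22}, x_{13}, y_m (m ∈ ℤ) and the relations (3) y_{m+2} = x_{22}^{−1} · x_{13}^{x_{22}^{m+1}} · y_m · (x_{13}^{x_{22}^{m}})^{−1} · x_{22} (m ∈ ℤ), the normal closure of the set { y_m^{−1} x_{31} y_m · x_{31}^{−1} : m ∈ ℤ } (relations (1)) equals the normal closure of the union of the two sets: { (x_{31}^{x_{22}^{−m} (x_{13} x_{22})^{m_1}})^{y_0} · ( x_{31}^{x_{22}^{−m} (x_{22} x_{13})^{m_1}} )^{−1} : m_1 ∈ ℤ, m = 2m_1 } and { (x_{31}^{x_{22}^{−(m+1)} (x_{22} x_{13})^{m_1} x_{22}^{2}})^{y_1} · ( x_{31}^{x_{22}^{−(m−1)} (x_{13} x_{22})^{m_1}} )^{−1} : m_1 ∈ ℤ, m = 2m_1+1 }; that is, modulo relations (3), relations (1) are equivalent to the displayed relations for y_0 (even m) and y_1 (odd m). -/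

import Mathlib

/-!
Put `z_m = x₂₂^m y_m x₂₂^{-m}`. Relations (3) then become the recursion
`z_{m+2} = (x₁₃ x₂₂) z_m (x₂₂ x₁₃)⁻¹`, whose coefficients do not depend on `m`. Hence
`z_{2k+e} = (x₁₃ x₂₂)^k z_e (x₂₂ x₁₃)^{-k}` (`Y_eq`), which writes every `y_m` as `p y₀ q⁻¹` or
`p y₁ q⁻¹` according to the parity of `m` (`Y_even`, `Y_odd`). Here `p` and `q` are exactly the
conjugators in the displayed relations; in the odd case this uses
`(x₂₂ x₁₃)^k x₂₂ = x₂₂ (x₁₃ x₂₂)^k`. Since `x₃₁^{p y q⁻¹} = x₃₁` and `(x₃₁^p)^y = x₃₁^q` differ by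
conjugation by `q` (`relator_conj`), the relators of the two families are conjugate in pairs, so
their normal closures agree.
-/

namespace Paper

/-- Conjugation `a^b = b⁻¹ * a * b`. -/
def cj {G : Type*} [Group G] (a b : G) : G := b⁻¹ * a * b

/-- Abstract generators `x_{31}, x_{22}, x_{13}` and `y_m` (`m ∈ ℤ`). -/
inductive GGen
  | x31 | x22 | x13 | y (m : ℤ)

namespace GGen
open FreeGroup
/-- The relations (3): `y_{m+2} = x_{22}⁻¹ x_{13}^{x_{22}^{m+1}} y_m (x_{13}^{x_{22}^m})⁻¹ x_{22}`,
for all `m ∈ ℤ`. -/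
def rels3 : Set (FreeGroup GGen) :=
  {r | ∃ m : ℤ,
    r = of (y (m + 2)) *
        ((of x22)⁻¹ * cj (of x13) (of x22 ^ (m + 1)) * of (y m) *
         (cj (of x13) (of x22 ^ m))⁻¹ * of x22)⁻¹}
end GGen

/-- The group `G` presented by `x_{31}, x_{22}, x_{13}, y_m (m ∈ ℤ)` and the relations (3). -/
abbrev GG := PresentedGroup GGen.rels3

/-- `x_{31}` as an element of `G`. -/
def X31 : GG := PresentedGroup.of GGen.x31
/-- `x_{22}` as an element of `G`. -/
def X22 : GG := PresentedGroup.of GGen.x22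
/-- `x_{13}` as an element of `G`. -/
def X13 : GG := PresentedGroup.of GGen.x13
/-- `y_m` as an element of `G`. -/
def Y (m : ℤ) : GG := PresentedGroup.of (GGen.y m)


/-- A two-step recursion `z (m + 2) = u z_m v⁻¹` is solved by powers of `u` and `v`. -/
lemma two_step_solution {G : Type*} [Group G] (z : ℤ → G) (u v : G)
    (h : ∀ m, z (m + 2) = u * z m * v⁻¹) (e k : ℤ) :
    z (2 * k + e) = u ^ k * z e * (v ^ k)⁻¹ := by
  induction k using Int.induction_on with
  | zero => simp
  | succ n ih =>
    have h1 := h (2 * n + e)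
    rw [show 2 * ((n : ℤ) + 1) + e = 2 * n + e + 2 by ring, h1, ih,
      zpow_add_one v, add_comm (n : ℤ) 1, zpow_one_add u, ← zpow_add_one v, add_comm (n : ℤ) 1,
      zpow_one_add v]
    have := (Commute.refl v).zpow_right (n : ℤ)
    rw [this.eq]
    group
  | pred n ih =>
    have h1 := h (2 * (-n - 1) + e)
    rw [show 2 * (-(n : ℤ) - 1) + e + 2 = 2 * (-n) + e by ring, ih] at h1
    have h2 : z (2 * (-(n : ℤ) - 1) + e)
        = u⁻¹ * (u ^ (-(n : ℤ)) * z e * (v ^ (-(n : ℤ)))⁻¹) * v := by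
      rw [h1]; group
    rw [h2]
    group

/-- Relations (3) in the group `GG`, with the conjugations expanded. -/
lemma Y_add_two (m : ℤ) :
    Y (m + 2) = X22⁻¹ * cj X13 (X22 ^ (m + 1)) * Y m * (cj X13 (X22 ^ m))⁻¹ * X22 := by
  have h : PresentedGroup.mk GGen.rels3 _ = 1 :=
    PresentedGroup.one_of_mem (rels := GGen.rels3) ⟨m, rfl⟩
  simp only [cj, map_mul, map_inv, map_zpow] at h
  exact mul_inv_eq_one.mp h

/-- The elements `x₂₂^m y_m x₂₂^{-m}` satisfy a two-step recursion whose coefficients do not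
depend on `m`; this is its solution. -/
lemma Y_eq (e k : ℤ) :
    X22 ^ (2 * k + e) * Y (2 * k + e) * (X22 ^ (2 * k + e))⁻¹ =
      (X13 * X22) ^ k * (X22 ^ e * Y e * (X22 ^ e)⁻¹) * ((X22 * X13) ^ k)⁻¹ := by
  refine two_step_solution (fun m => X22 ^ m * Y m * (X22 ^ m)⁻¹) _ _ (fun m => ?_) e k
  simp only [Y_add_two, cj]
  group

/-- Slides the outer factors of a conjugator onto the two sides: if `w = p y q⁻¹`, then the
relators expressing `x^w = x` and `(x^p)^y = x^q` are conjugate by `q`. -/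
lemma relator_conj {G : Type*} [Group G] (x y p q : G) :
    (p * y * q⁻¹)⁻¹ * x * (p * y * q⁻¹) * x⁻¹ =
      q * (cj (cj x p) y * (cj x q)⁻¹) * q⁻¹ := by
  simp only [cj]
  group

lemma mul_zpow_shift {G : Type*} [Group G] (a b : G) (k : ℤ) :
    (a * b) ^ k * a = a * (b * a) ^ k :=
  ((SemiconjBy.zpow_right (show SemiconjBy a (b * a) (a * b) by
    simp [SemiconjBy, mul_assoc]) k).eq).symm

lemma Y_even (k : ℤ) :
    Y (2 * k) = X22 ^ (-(2 * k)) * (X13 * X22) ^ k * Y 0 *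
      (X22 ^ (-(2 * k)) * (X22 * X13) ^ k)⁻¹ := by
  have h := Y_eq 0 k
  simp only [add_zero, zpow_zero, one_mul, inv_one, mul_one] at h
  calc Y (2 * k)
      = X22 ^ (-(2 * k)) * (X22 ^ (2 * k) * Y (2 * k) * (X22 ^ (2 * k))⁻¹) * X22 ^ (2 * k) := by
        group
    _ = _ := by rw [h, mul_inv_rev, zpow_neg, inv_inv]; simp only [mul_assoc]

lemma Y_odd (k : ℤ) :
    Y (2 * k + 1) = X22 ^ (-(2 * k + 2)) * (X22 * X13) ^ k * X22 ^ (2 : ℤ) * Y 1 *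
      (X22 ^ (-(2 * k)) * (X13 * X22) ^ k)⁻¹ := by
  have h := Y_eq 1 k
  have hs := mul_zpow_shift X22 X13 k
  have h1 : (X22 * X13) ^ k = X22 * (X13 * X22) ^ k * X22⁻¹ := by rw [← hs]; group
  rw [h1] at h ⊢
  calc Y (2 * k + 1)
      = X22 ^ (-(2 * k + 1)) * (X22 ^ (2 * k + 1) * Y (2 * k + 1) * (X22 ^ (2 * k + 1))⁻¹) *
          X22 ^ (2 * k + 1) := by
        group
    _ = _ := by
        rw [h]
        generalize (X13 * X22) ^ k = c
        group

/-- Lemma 4.5: modulo the relations (3), the relations (1) `y_m⁻¹ x_{31} y_m = x_{31}` are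
equivalent to the union of
`(x_{31}^{x_{22}^{-m}(x_{13}x_{22})^{m₁}})^{y_0} = x_{31}^{x_{22}^{-m}(x_{22}x_{13})^{m₁}}`
(`m = 2m₁` even) and
`(x_{31}^{x_{22}^{-(m+1)}(x_{22}x_{13})^{m₁}x_{22}^2})^{y_1}
 = x_{31}^{x_{22}^{-(m-1)}(x_{13}x_{22})^{m₁}}` (`m = 2m₁+1` odd):
the two normal closures coincide. -/
theorem statement8 :
    Subgroup.normalClosure
        {g : GG | ∃ m : ℤ, g = (Y m)⁻¹ * X31 * Y m * X31⁻¹} =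
    Subgroup.normalClosure
        ({g : GG | ∃ m₁ : ℤ,
            g = cj (cj X31 (X22 ^ (-(2 * m₁)) * (X13 * X22) ^ m₁)) (Y 0) *
                (cj X31 (X22 ^ (-(2 * m₁)) * (X22 * X13) ^ m₁))⁻¹} ∪
         {g : GG | ∃ m₁ : ℤ,
            g = cj (cj X31 (X22 ^ (-(2 * m₁ + 2)) * (X22 * X13) ^ m₁ * X22 ^ (2 : ℤ))) (Y 1) *
                (cj X31 (X22 ^ (-(2 * m₁)) * (X13 * X22) ^ m₁))⁻¹}) := by
  have mem_iff (S : Subgroup GG) (hS : S.Normal) (q g : GG) : q * g * q⁻¹ ∈ S ↔ g ∈ S :=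
    hS.mem_comm_iff.trans (by simp [← mul_assoc])
  -- Both families of relators are matched one by one, up to conjugation in `GG`.
  have even_conj (k : ℤ) := relator_conj X31 (Y 0)
    (X22 ^ (-(2 * k)) * (X13 * X22) ^ k) (X22 ^ (-(2 * k)) * (X22 * X13) ^ k)
  have odd_conj (k : ℤ) := relator_conj X31 (Y 1)
    (X22 ^ (-(2 * k + 2)) * (X22 * X13) ^ k * X22 ^ (2 : ℤ))
    (X22 ^ (-(2 * k)) * (X13 * X22) ^ k)
  simp only [← Y_even] at even_conj
  simp only [← Y_odd] at odd_conj
  apply le_antisymm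
  · refine Subgroup.normalClosure_le_normal ?_
    rintro _ ⟨m, rfl⟩
    obtain ⟨k, rfl | rfl⟩ := Int.even_or_odd' m
    · rw [even_conj k]
      exact (mem_iff _ Subgroup.normalClosure_normal _ _).mpr
        (Subgroup.subset_normalClosure (Or.inl ⟨k, rfl⟩))
    · rw [odd_conj k]
      exact (mem_iff _ Subgroup.normalClosure_normal _ _).mpr
        (Subgroup.subset_normalClosure (Or.inr ⟨k, rfl⟩))
  · refine Subgroup.normalClosure_le_normal ?_
    rintro _ (⟨k, rfl⟩ | ⟨k, rfl⟩)
    · refine (mem_iff _ Subgroup.normalClosure_normal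
        (X22 ^ (-(2 * k)) * (X22 * X13) ^ k) _).mp ?_
      rw [← even_conj k]
      exact Subgroup.subset_normalClosure ⟨_, rfl⟩
    · refine (mem_iff _ Subgroup.normalClosure_normal
        (X22 ^ (-(2 * k)) * (X13 * X22) ^ k) _).mp ?_
      rw [← odd_conj k]
      exact Subgroup.subset_normalClosure ⟨_, rfl⟩

end Paper
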